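/- arXiv:2010.08931 — 7 statements merged into one kernel-verified Lean document; each statement's English description precedes it below -/
import Mathlib

section
/- Let S be a semigroup with a zero element in which every element is regular (for every x in S there exists x' in S with x*x'*x = x). Let e and f be idempotents of S. Then e*f = 0 if and only if the only element g of S satisfying g*g = g, g*e = g and f*g = g is g = 0. -/
/-!
If `g` is idempotent with `g * e = g` and `f * g = g`, then `g = g * g = g * (e * f) * g`, so
`e * f = 0` forces `g = 0`. Conversely, let `x` satisfy `(e * f) * x * (e * f) = e * f`. Then
`y = x * (e * f) * x` is an inverse of `e * f`, the sandwich element `g = f * y * e` is an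
idempotent in `M(e, f)`, and `e * g * f = e * f`; hence `g = 0` gives `e * f = 0`.
-/

/-- In a regular semigroup with zero, for idempotents `e`, `f`,
`e*f = 0` iff `M(e,f) = {0}`, i.e. the only idempotent `g` with
`g*e = g` and `f*g = g` is `0`. -/
theorem mul_eq_zero_iff_mset_trivial {S : Type*} [SemigroupWithZero S]
    (hreg : ∀ x : S, ∃ x' : S, x * x' * x = x)
    (e f : S) (he : e * e = e) (hf : f * f = f) :
    e * f = 0 ↔ ∀ g : S, g * g = g → g * e = g → f * g = g → g = 0 := by
  constructor
  · intro h g hg hge hfg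
    calc g = (g * e) * (f * g) := by rw [hge, hfg, hg]
      _ = g * (e * f) * g := by simp only [mul_assoc]
      _ = 0 := by rw [h, mul_zero, zero_mul]
  · intro h
    obtain ⟨x, hx⟩ := hreg (e * f)
    obtain ⟨y, hxy, hyx⟩ : ∃ y, e * f * y * (e * f) = e * f ∧ y * (e * f) * y = y := by
      generalize e * f = p at hx
      refine ⟨x * p * x, ?_, ?_⟩
      · calc p * (x * p * x) * p = (p * x * p) * x * p := by simp only [mul_assoc]
          _ = p := by rw [hx, hx]
      · calc x * p * x * p * (x * p * x) = x * ((p * x * p) * x * p) * x := by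
              simp only [mul_assoc]
          _ = x * p * x := by rw [hx, hx]
    have hg : f * y * e = 0 := by
      apply h
      · calc f * y * e * (f * y * e) = f * (y * (e * f) * y) * e := by simp only [mul_assoc]
          _ = f * y * e := by rw [hyx]
      · rw [mul_assoc, he]
      · rw [← mul_assoc, ← mul_assoc, hf]
    calc e * f = e * f * y * (e * f) := hxy.symm
      _ = e * (f * y * e) * f := by simp only [mul_assoc]
      _ = 0 := by rw [hg, mul_zero, zero_mul]
end

section
/- Let R be a regular ring with unity and let e, f be idempotent elements of R. Then f*(1-e) = f if and only if the only element g of R satisfying g*g = g, g*f = g and e*g = g is g = 0 (that is, f ω^l (1-e) if and only if M(f,e) = {0}). -/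
/-!
The condition `f * (1 - e) = f` says `f * e = 0`. If it holds, any `g` in `M(f,e)` satisfies
`g = g * g = (g * f) * (e * g) = 0`. Conversely, for an inverse `b` of `a = f * e` with
`a * b * a = a` and `b * a * b = b` (regularity), the sandwich element `e * b * f` lies in
`M(f,e)`, and it determines `a` through `f * (e * b * f) * e = a * b * a = a`; so it vanishes
only when `f * e = 0`.
-/

/-- In a regular ring with unity, for idempotents `e`, `f`,
`f ω^l (1-e)` iff `M(f,e) = {0}`. -/
theorem omega_l_annid_iff_mset_trivial {R : Type*} [Ring R]
    (hreg : ∀ a : R, ∃ b : R, a * b * a = a)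
    (e f : R) (he : e * e = e) (hf : f * f = f) :
    f * (1 - e) = f ↔ ∀ g : R, g * g = g → g * f = g → e * g = g → g = 0 := by
  rw [mul_sub, mul_one, sub_eq_self]
  constructor
  · intro h g hg hgf heg
    calc g = (g * f) * (e * g) := by rw [hgf, heg, hg]
      _ = g * (f * e) * g := by noncomm_ring
      _ = 0 := by rw [h, mul_zero, zero_mul]
  · intro h
    obtain ⟨b, hb⟩ := hreg (f * e)
    -- `c` is an inverse of `f * e` in both senses, unlike `b`.
    obtain ⟨c, hac, hca⟩ : ∃ c : R, f * e * c * (f * e) = f * e ∧ c * (f * e) * c = c := by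
      generalize f * e = a at hb
      refine ⟨b * a * b, ?_, ?_⟩
      · calc a * (b * a * b) * a = a * b * a * b * a := by noncomm_ring
          _ = a := by rw [hb, hb]
      · calc b * a * b * a * (b * a * b) = b * (a * b * a * b * a) * b := by noncomm_ring
          _ = b * a * b := by rw [hb, hb]
    have h0 : e * c * f = 0 := by
      apply h
      · calc e * c * f * (e * c * f) = e * (c * (f * e) * c) * f := by noncomm_ring
          _ = e * c * f := by rw [hca]
      · rw [mul_assoc, hf]
      · rw [← mul_assoc, ← mul_assoc, he]
    calc f * e = f * e * c * (f * e) := hac.symm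
      _ = f * (e * c * f) * e := by noncomm_ring
      _ = 0 := by rw [h0, mul_zero, zero_mul]
end

section
/- Let R be a regular ring with unity and let e, f be idempotent elements of R with e*f = 0 and f*e = 0. Then e+f is idempotent, h := 1-(e+f) is idempotent, and h is the unique element g of R satisfying all of: g*g = g, (1-e)*g*(1-f) = (1-e)*(1-f), (1-f)*g*(1-e) = g, (1-f)*g*(1-e) = (1-f)*(1-e), and (1-e)*g*(1-f) = g. (That is, h is the unique common element of the sandwich sets S(1-e, 1-f) and S(1-f, 1-e).) -/
/-!
Orthogonality of `e` and `f` gives `(1 - e) * (1 - f) = 1 - (e + f) = (1 - f) * (1 - e)`.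
Uniqueness follows by chaining the two equations for `(1 - f) * g * (1 - e)`; conversely
`1 - (e + f)` absorbs the idempotents `1 - e` and `1 - f` from either side, because it is their
product in either order.
-/

/-- In a regular ring with unity, if `e`, `f` are idempotents with `e*f = f*e = 0`,
then `e+f` is idempotent, `h = 1-(e+f)` is idempotent, and `h` is the unique common
element of the sandwich sets `S(1-e, 1-f)` and `S(1-f, 1-e)`. -/
theorem sandwich_sets_unique_common_element {R : Type*} [Ring R]
    (hreg : ∀ a : R, ∃ b : R, a * b * a = a)
    (e f : R) (he : e * e = e) (hf : f * f = f)
    (hef : e * f = 0) (hfe : f * e = 0) :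
    (e + f) * (e + f) = e + f ∧
    (1 - (e + f)) * (1 - (e + f)) = 1 - (e + f) ∧
    (∀ g : R,
      (g * g = g ∧
        (1 - e) * g * (1 - f) = (1 - e) * (1 - f) ∧
        (1 - f) * g * (1 - e) = g ∧
        (1 - f) * g * (1 - e) = (1 - f) * (1 - e) ∧
        (1 - e) * g * (1 - f) = g) ↔ g = 1 - (e + f)) := by
  have h₁ : (1 - e) * (1 - f) = 1 - (e + f) := by
    rw [mul_sub, sub_mul, sub_mul, hef]; simp only [one_mul, mul_one]; abel
  have h₂ : (1 - f) * (1 - e) = 1 - (e + f) := by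
    rw [mul_sub, sub_mul, sub_mul, hfe]; simp only [one_mul, mul_one]; abel
  have hs : (e + f) * (e + f) = e + f := by
    simp [mul_add, add_mul, he, hf, hef, hfe]
  have hi : (1 - (e + f)) * (1 - (e + f)) = 1 - (e + f) :=
    IsIdempotentElem.one_sub hs
  have hee : (1 - e) * (1 - e) = 1 - e := IsIdempotentElem.one_sub he
  have hff : (1 - f) * (1 - f) = 1 - f := IsIdempotentElem.one_sub hf
  refine ⟨hs, hi, fun g => ⟨?_, ?_⟩⟩
  · rintro ⟨-, -, hg, hg', -⟩
    exact hg.symm.trans (hg'.trans h₂)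
  · rintro rfl
    have k₁ : (1 - e) * (1 - (e + f)) * (1 - f) = 1 - (e + f) := by
      rw [← h₁, ← mul_assoc, hee, mul_assoc, hff]
    have k₂ : (1 - f) * (1 - (e + f)) * (1 - e) = 1 - (e + f) := by
      rw [← h₂, ← mul_assoc, hff, mul_assoc, hee]
    exact ⟨hi, k₁.trans h₁.symm, k₂, k₂.trans h₂.symm, k₁⟩
end

section
/- Let R be a regular ring with unity. Then for every x in R there exists an idempotent e in R such that the left annihilator {y : y*x = 0} equals the principal left ideal R*e (the span of {e} in R as a left module over itself); and for every x in R there exists z in R such that the principal left ideal R*x equals the left annihilator {y : y*z = 0}. (Thus the multiplicative semigroup of R is a strongly regular Baer semigroup on the left.) -/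
/-- In a regular ring with unity, every left annihilator is a principal left ideal
generated by an idempotent, and every principal left ideal is a left annihilator. -/
theorem regular_ring_strongly_regular_Baer_left {R : Type*} [Ring R]
    (hreg : ∀ a : R, ∃ b : R, a * b * a = a) :
    (∀ x : R, ∃ e : R, e * e = e ∧
      {y : R | y * x = 0} = (Submodule.span R ({e} : Set R) : Set R)) ∧
    (∀ x : R, ∃ z : R,
      (Submodule.span R ({x} : Set R) : Set R) = {y : R | y * z = 0}) := by
  constructor
  · intro x
    obtain ⟨b, hb⟩ := hreg x
    -- `x * b` is idempotent and generates the right ideal `x R`; its complement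
    -- generates the left annihilator of `x`.
    have hx : (1 - x * b) * x = 0 := by rw [sub_mul, one_mul, hb, sub_self]
    refine ⟨1 - x * b, ?_, ?_⟩
    · rw [mul_sub, mul_one, ← mul_assoc, hx, zero_mul, sub_zero]
    · ext y
      simp only [Set.mem_setOf_eq, SetLike.mem_coe, Submodule.mem_span_singleton, smul_eq_mul]
      constructor
      · intro hy
        exact ⟨y, by rw [mul_sub, mul_one, ← mul_assoc, hy, zero_mul, sub_zero]⟩
      · rintro ⟨c, rfl⟩
        rw [mul_assoc, hx, mul_zero]
  · intro x
    obtain ⟨b, hb⟩ := hreg x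
    -- `b * x` is idempotent with `R x = R (b * x)`, the left annihilator of its complement.
    refine ⟨1 - b * x, ?_⟩
    ext y
    simp only [Set.mem_setOf_eq, SetLike.mem_coe, Submodule.mem_span_singleton, smul_eq_mul]
    constructor
    · rintro ⟨c, rfl⟩
      rw [mul_assoc, mul_sub, mul_one, ← mul_assoc x, hb, sub_self, mul_zero]
    · intro hy
      exact ⟨y * b, by rw [mul_sub, mul_one, sub_eq_zero] at hy; rw [mul_assoc, ← hy]⟩
end

section
/- Let R be a regular ring with unity, let n ≥ 1, and let e_1, ..., e_n be idempotent elements of R such that e_i*e_j = 0 for all i ≠ j. Then e_1 + e_2 + ... + e_n = 1 if and only if every idempotent e of R satisfying e*e_i = e_i and e_i*e = e_i for all i = 1, ..., n equals 1. -/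
/-- In a regular ring with unity, for pairwise orthogonal idempotents
`e_1, ..., e_n` (with `n ≥ 1`), their sum equals `1` iff the only idempotent `e`
with `e_i ω e` for all `i` is `1`. -/
theorem sum_eq_one_iff_no_proper_upper_bound {R : Type*} [Ring R]
    (hreg : ∀ a : R, ∃ b : R, a * b * a = a)
    (n : ℕ) (hn : 1 ≤ n) (e : Fin n → R) (he : ∀ i, e i * e i = e i)
    (horth : ∀ i j, i ≠ j → e i * e j = 0) :
    (∑ i : Fin n, e i) = 1 ↔
      ∀ g : R, g * g = g → (∀ i, g * e i = e i ∧ e i * g = e i) → g = 1 := by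
  constructor
  · intro hsum g _ hg
    calc g = g * ∑ i, e i := by rw [hsum, mul_one]
      _ = ∑ i, e i := by
        rw [Finset.mul_sum]
        exact Finset.sum_congr rfl fun i _ => (hg i).1
      _ = 1 := hsum
  · intro h
    -- By orthogonality, the sum is itself an idempotent upper bound of the `e i`.
    have hleft : ∀ i, (∑ j, e j) * e i = e i := fun i => by
      rw [Finset.sum_mul, Finset.sum_eq_single i (fun j _ hj => horth j i hj) (by simp), he]
    have hright : ∀ i, e i * (∑ j, e j) = e i := fun i => by
      rw [Finset.mul_sum, Finset.sum_eq_single i (fun j _ hj => horth i j hj.symm) (by simp), he]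
    refine h _ ?_ fun i => ⟨hleft i, hright i⟩
    rw [Finset.mul_sum]
    exact Finset.sum_congr rfl fun i _ => hleft i
end

section
/- Let R be a regular ring with unity and let e, f be idempotent elements of R. Then the following are equivalent: (1) there exists an idempotent k in R such that, in the lattice of left ideals of R (R viewed as a left module over itself), (span R {e}) ⊓ (span R {k}) = ⊥, (span R {e}) ⊔ (span R {k}) = ⊤, (span R {f}) ⊓ (span R {k}) = ⊥, and (span R {f}) ⊔ (span R {k}) = ⊤ (i.e., the principal left ideals Re and Rf have a common complement, they are in perspective); (2) there exist idempotents g, h in R with e*g = e, g*e = g, h*g = g, g*h = h, h*f = h, and f*h = f (i.e., e ℒ g, g ℛ h, h ℒ f, so that 1 ≤ d_l(e,f) ≤ 3). -/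
/-!
A decomposition `R = Re ⊕ Rk` into left ideals is the same thing as an idempotent `g` with
`Rg = Re` and `R(1 - g) = Rk`, namely the `Re`-component of `1`. If `k` is a common complement of
`Re` and `Rf`, this yields idempotents `g ℒ e` and `h ℒ f` with `R(1 - g) = Rk = R(1 - h)`, and the
last equality says exactly that `g ℛ h`. Conversely, if `e ℒ g ℛ h ℒ f`, then
`R(1 - g) = R(1 - h)` is a complement of both `Rg = Re` and `Rh = Rf`.
-/

/-- The `Re`-component `g` of `1` in `R = Re ⊕ Rk` is an idempotent with `e ℒ g`, `kg = 0` and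
`1 - g ∈ Rk`. The element `k` itself need not be idempotent. -/
theorem exists_idempotent_of_isCompl {R : Type*} [Ring R] {e k : R} (he : e * e = e)
    (hinf : Submodule.span R ({e} : Set R) ⊓ Submodule.span R ({k} : Set R) = ⊥)
    (hsup : Submodule.span R ({e} : Set R) ⊔ Submodule.span R ({k} : Set R) = ⊤) :
    ∃ g b : R, g * g = g ∧ e * g = e ∧ g * e = g ∧ k * g = 0 ∧ 1 - g = b * k := by
  have key : ∀ x a b : R, x = a * e → x = b * k → x = 0 := by
    intro x a b h1 h2
    have hx : x ∈ Submodule.span R ({e} : Set R) ⊓ Submodule.span R ({k} : Set R) :=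
      ⟨Submodule.mem_span_singleton.2 ⟨a, h1.symm⟩, Submodule.mem_span_singleton.2 ⟨b, h2.symm⟩⟩
    rwa [hinf, Submodule.mem_bot] at hx
  have h1 : (1 : R) ∈ Submodule.span R ({e} : Set R) ⊔ Submodule.span R ({k} : Set R) :=
    hsup ▸ Submodule.mem_top
  obtain ⟨y, hy, z, hz, hyz⟩ := Submodule.mem_sup.1 h1
  obtain ⟨a, rfl⟩ := Submodule.mem_span_singleton.1 hy
  obtain ⟨b, rfl⟩ := Submodule.mem_span_singleton.1 hz
  simp only [smul_eq_mul] at hyz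
  have hb : 1 - a * e = b * k := by rw [← hyz]; abel
  have heg : e - e * (a * e) = 0 :=
    key _ (1 - e * a) (e * b) (by noncomm_ring) (by rw [mul_assoc, ← hb]; noncomm_ring)
  have hkg : k * (a * e) = 0 :=
    key _ (k * a) (1 - k * b) (by noncomm_ring)
      (by rw [sub_mul, mul_assoc, ← hb]; noncomm_ring)
  have heg' : e * (a * e) = e := (sub_eq_zero.1 heg).symm
  exact ⟨a * e, b, by rw [mul_assoc, heg'], heg', by rw [mul_assoc, he], hkg, hb⟩

/-- If `e ℒ g` and `g ℛ p`, then `R(1 - p)` is a complement of `Re`. Taking `p = g` covers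
`R(1 - g)`. -/
theorem isCompl_span_one_sub {R : Type*} [Ring R] {e g p : R}
    (heg : e * g = e) (hge : g * e = g) (hpg : p * g = g) (hgp : g * p = p) :
    Submodule.span R ({e} : Set R) ⊓ Submodule.span R ({1 - p} : Set R) = ⊥ ∧
      Submodule.span R ({e} : Set R) ⊔ Submodule.span R ({1 - p} : Set R) = ⊤ := by
  constructor
  · rw [eq_bot_iff]
    rintro x ⟨hx, hx'⟩
    obtain ⟨a, rfl⟩ := Submodule.mem_span_singleton.1 hx
    obtain ⟨b, hb⟩ := Submodule.mem_span_singleton.1 hx'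
    simp only [smul_eq_mul] at hb ⊢
    -- Right multiplication by `g` fixes `Re` and annihilates `R(1 - p)`.
    rw [Submodule.mem_bot, ← heg, ← mul_assoc, ← hb, mul_assoc, sub_mul, hpg, one_mul, sub_self,
      mul_zero]
  · refine (Ideal.eq_top_iff_one _).2 (Submodule.mem_sup.2
      ⟨g * e, Submodule.mem_span_singleton.2 ⟨g, rfl⟩, (1 - g) * (1 - p),
        Submodule.mem_span_singleton.2 ⟨1 - g, rfl⟩, ?_⟩)
    have hz : (1 - g) * p = 0 := by rw [sub_mul, hgp, one_mul, sub_self]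
    rw [hge, mul_sub, hz]
    noncomm_ring

/-- In a regular ring with unity, for idempotents `e`, `f`, the principal left
ideals `Re` and `Rf` are in perspective (have a common complement in the lattice
of left ideals) iff `1 ≤ d_l(e,f) ≤ 3`, i.e. there exist idempotents `g`, `h`
with `e ℒ g ℛ h ℒ f`. -/
theorem perspective_iff_dl_le_three {R : Type*} [Ring R]
    (hreg : ∀ a : R, ∃ b : R, a * b * a = a)
    (e f : R) (he : e * e = e) (hf : f * f = f) :
    (∃ k : R, k * k = k ∧
      Submodule.span R ({e} : Set R) ⊓ Submodule.span R ({k} : Set R) = ⊥ ∧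
      Submodule.span R ({e} : Set R) ⊔ Submodule.span R ({k} : Set R) = ⊤ ∧
      Submodule.span R ({f} : Set R) ⊓ Submodule.span R ({k} : Set R) = ⊥ ∧
      Submodule.span R ({f} : Set R) ⊔ Submodule.span R ({k} : Set R) = ⊤) ↔
    (∃ g h : R, g * g = g ∧ h * h = h ∧
      e * g = e ∧ g * e = g ∧ h * g = g ∧ g * h = h ∧ h * f = h ∧ f * h = f) := by
  constructor
  · rintro ⟨k, -, h1, h2, h3, h4⟩
    obtain ⟨g, b, hgg, heg, hge, hkg, hb⟩ := exists_idempotent_of_isCompl he h1 h2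
    obtain ⟨h, c, hhh, hfh, hhf, hkh, hc⟩ := exists_idempotent_of_isCompl hf h3 h4
    refine ⟨g, h, hgg, hhh, heg, hge, ?_, ?_, hhf, hfh⟩
    · have : (1 - h) * g = 0 := by rw [hc, mul_assoc, hkg, mul_zero]
      rw [sub_mul, one_mul] at this
      exact (sub_eq_zero.1 this).symm
    · have : (1 - g) * h = 0 := by rw [hb, mul_assoc, hkh, mul_zero]
      rw [sub_mul, one_mul] at this
      exact (sub_eq_zero.1 this).symm
  · rintro ⟨g, h, hgg, hhh, heg, hge, hhg, hgh, hhf, hfh⟩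
    obtain ⟨h1, h2⟩ := isCompl_span_one_sub heg hge hgg hgg
    obtain ⟨h3, h4⟩ := isCompl_span_one_sub hfh hhf hgh hhg
    exact ⟨1 - g, IsIdempotentElem.one_sub hgg, h1, h2, h3, h4⟩
end

section
/- Let R be a regular ring and let n be a natural number. Then the matrix ring M_n(R) of n×n matrices over R is a regular ring: for every matrix A in M_n(R) there exists a matrix B in M_n(R) with A*B*A = A. -/
/-!
The proof passes through rectangular matrices. McCoy's lemma says that `A` has an inner inverse as
soon as `A - A * Y * A` does, for some `Y`. If `A = [C D]` and `C * X * C = C`, then `Y = [X; 0]`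
turns `A` into `[0 E]` with `E = D - C * X * D`, which has an inner inverse when `E` does. Hence
regularity of all `m × p` and all `m × q` matrices gives regularity of all `m × (p + q)` matrices,
and symmetrically for rows. Starting from `1 × 1` matrices, that is from the ring itself, induction
on the number of columns and then on the number of rows reaches every size.
-/

namespace Matrix

variable {R : Type*} [Ring R]
variable {m n p q : Type*} [Fintype m] [Fintype n] [Fintype p] [Fintype q]

/-- A rectangular matrix `A` has an inner inverse if `A * B * A = A` for some matrix `B` of the
transposed shape. -/
def HasInnerInverse (A : Matrix m n R) : Prop := ∃ B : Matrix n m R, A * B * A = A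

/-- McCoy's lemma. If `Z` is an inner inverse of `A - A * Y * A`, then
`(1 - Y * A) * Z * (1 - A * Y) + Y` is one of `A`; the proof uses its expanded form. -/
lemma HasInnerInverse.of_sub {A : Matrix m n R} (Y : Matrix n m R)
    (h : HasInnerInverse (A - A * Y * A)) : HasInnerInverse A := by
  obtain ⟨Z, hZ⟩ := h
  refine ⟨Z - Y * A * Z - Z * A * Y + Y * A * Z * A * Y + Y, ?_⟩
  rw [← sub_eq_zero] at hZ ⊢
  rw [← hZ]
  simp only [Matrix.mul_add, Matrix.add_mul, Matrix.mul_sub, Matrix.sub_mul, Matrix.mul_assoc]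
  abel

lemma HasInnerInverse.of_reindex {A : Matrix m n R} (e : p ≃ m) (f : q ≃ n)
    (h : HasInnerInverse (A.submatrix e f)) : HasInnerInverse A := by
  obtain ⟨B, hB⟩ := h
  refine ⟨B.submatrix f.symm e.symm, ?_⟩
  have := congrArg (fun M => M.submatrix e.symm f.symm) hB
  simpa [← submatrix_mul_equiv _ _ _ e.symm, ← submatrix_mul_equiv _ _ _ f.symm] using this

lemma hasInnerInverse_fromCols (hp : ∀ A : Matrix m p R, HasInnerInverse A)
    (hq : ∀ A : Matrix m q R, HasInnerInverse A) (C : Matrix m p R) (D : Matrix m q R) :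
    HasInnerInverse (fromCols C D) := by
  obtain ⟨X, hX⟩ := hp C
  obtain ⟨Z, hZ⟩ := hq (D - C * X * D)
  refine .of_sub (fromRows X 0) ⟨fromRows 0 Z, ?_⟩
  have h : fromCols C D - fromCols C D * fromRows X (0 : Matrix q m R) * fromCols C D
      = fromCols (0 : Matrix m p R) (D - C * X * D) := by
    rw [fromCols_mul_fromRows, Matrix.mul_zero, add_zero, mul_fromCols, hX]
    ext i (j | j) <;> simp
  rw [h, fromCols_mul_fromRows, Matrix.mul_zero, zero_add, mul_fromCols, hZ, Matrix.mul_zero]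

lemma hasInnerInverse_fromRows (hp : ∀ A : Matrix p n R, HasInnerInverse A)
    (hq : ∀ A : Matrix q n R, HasInnerInverse A) (C : Matrix p n R) (D : Matrix q n R) :
    HasInnerInverse (fromRows C D) := by
  obtain ⟨X, hX⟩ := hp C
  obtain ⟨Z, hZ⟩ := hq (D - D * X * C)
  refine .of_sub (fromCols X 0) ⟨fromCols 0 Z, ?_⟩
  have h : fromRows C D - fromRows C D * fromCols X (0 : Matrix n q R) * fromRows C D
      = fromRows (0 : Matrix p n R) (D - D * X * C) := by
    rw [Matrix.mul_assoc, fromCols_mul_fromRows, Matrix.zero_mul, add_zero, fromRows_mul,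
      ← Matrix.mul_assoc, ← Matrix.mul_assoc, hX]
    ext (i | i) j <;> simp
  rw [h, Matrix.mul_assoc, fromCols_mul_fromRows, Matrix.zero_mul, zero_add, fromRows_mul,
    ← Matrix.mul_assoc (D - D * X * C), hZ, Matrix.zero_mul]

lemma hasInnerInverse_row (hreg : ∀ a : R, ∃ b : R, a * b * a = a) (k : ℕ) :
    ∀ A : Matrix (Fin 1) (Fin k) R, HasInnerInverse A := by
  induction k with
  | zero => exact fun A => ⟨0, Subsingleton.elim _ _⟩
  | succ k ih =>
    intro A
    refine .of_reindex (Equiv.refl _) finSumFinEquiv ?_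
    rw [← fromCols_toCols (A.submatrix _ _)]
    refine hasInnerInverse_fromCols ih (fun M => ?_) _ _
    obtain ⟨b, hb⟩ := hreg (M 0 0)
    refine ⟨of fun _ _ => b, ?_⟩
    ext i j
    rw [Subsingleton.elim i 0, Subsingleton.elim j 0]
    simpa [mul_apply] using hb

lemma hasInnerInverse_of_regular (hreg : ∀ a : R, ∃ b : R, a * b * a = a) (l k : ℕ) :
    ∀ A : Matrix (Fin l) (Fin k) R, HasInnerInverse A := by
  induction l with
  | zero => exact fun A => ⟨0, Subsingleton.elim _ _⟩
  | succ l ih =>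
    intro A
    refine .of_reindex finSumFinEquiv (Equiv.refl _) ?_
    rw [← fromRows_toRows (A.submatrix _ _)]
    exact hasInnerInverse_fromRows ih (hasInnerInverse_row hreg k) _ _

end Matrix

/-- The ring of `n × n` matrices over a regular ring is regular. -/
theorem matrix_ring_regular {R : Type*} [Ring R]
    (hreg : ∀ a : R, ∃ b : R, a * b * a = a) (n : ℕ) :
    ∀ A : Matrix (Fin n) (Fin n) R, ∃ B : Matrix (Fin n) (Fin n) R,
      A * B * A = A :=
  Matrix.hasInnerInverse_of_regular hreg n n
end
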